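/- arXiv:2301.02039 — 3 statements merged into one kernel-verified Lean document; each statement's English description precedes it below -/
import Mathlib

section
/- Let n, k, ρ be natural numbers with ρ > 1, k > 0 and k + ρ ≤ n. Then, in the real numbers, C(n−ρ, k) / C(n, k) < (1 − k/n)^ρ, where C denotes the binomial coefficient. Equivalently, 1 − (1 − k/n)^ρ < 1 − C(n−ρ,k)/C(n,k), i.e. Δ < Δ^L: our node-ablation bounding constant is strictly smaller than the bounding constant of Levine & Feizi's randomized ablation applied with the same expected number k of retained nodes (paper's Proposition on tighter guarantees, Appendix B). -/
/-!
Drawing without replacement, `C(n - ρ, k) / C(n, k) = ∏ i < ρ, (n - k - i) / (n - i)`, with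
numerators truncated at `0`. The factor at `i = 0` is `1 - k / n` and each of the others is strictly
smaller, so already the second one makes the product strictly smaller than `(1 - k / n) ^ ρ`.
Cross-multiplied, this is a comparison of falling factorials over `ℕ`.
-/

-- Both sides, multiplied by `k !`, are `n.descFactorial (k + r)`.
theorem choose_sub_mul_descFactorial (n k r : ℕ) :
    (n - r).choose k * n.descFactorial r = n.choose k * (n - k).descFactorial r := by
  have removal_first : (n - r).descFactorial k * n.descFactorial r = n.descFactorial (k + r) := by
    simpa using Nat.descFactorial_mul_descFactorial (n := n) (Nat.le_add_left r k)
  have choice_first : (n - k).descFactorial r * n.descFactorial k = n.descFactorial (k + r) := by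
    simpa using Nat.descFactorial_mul_descFactorial (n := n) (Nat.le_add_right k r)
  refine Nat.eq_of_mul_eq_mul_left k.factorial_pos ?_
  rw [← mul_assoc, ← mul_assoc, ← Nat.descFactorial_eq_factorial_mul_choose,
    ← Nat.descFactorial_eq_factorial_mul_choose, removal_first, ← choice_first, mul_comm]

theorem sub_mul_le_mul_sub {m n : ℕ} (hmn : m ≤ n) (i : ℕ) : (m - i) * n ≤ m * (n - i) := by
  rw [Nat.sub_mul, Nat.mul_sub, mul_comm m i]
  exact Nat.sub_le_sub_left (Nat.mul_le_mul_left i hmn) (m * n)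

theorem sub_mul_lt_mul_sub {m n i : ℕ} (hm : 0 < m) (hmn : m < n) (hi : 0 < i) (hin : i < n) :
    (m - i) * n < m * (n - i) := by
  rw [Nat.sub_mul, Nat.mul_sub, mul_comm m i]
  exact Nat.sub_lt_sub_left (by rw [mul_comm]; exact Nat.mul_lt_mul_of_pos_left hin hm)
    (Nat.mul_lt_mul_of_pos_left hmn hi)

theorem descFactorial_mul_pow_le {m n : ℕ} (hmn : m ≤ n) (r : ℕ) :
    m.descFactorial r * n ^ r ≤ m ^ r * n.descFactorial r := by
  induction r with
  | zero => simp
  | succ r ih =>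
    calc m.descFactorial (r + 1) * n ^ (r + 1)
        = (m - r) * n * (m.descFactorial r * n ^ r) := by
          rw [Nat.descFactorial_succ]; ring
      _ ≤ m * (n - r) * (m ^ r * n.descFactorial r) :=
          Nat.mul_le_mul (sub_mul_le_mul_sub hmn r) ih
      _ = m ^ (r + 1) * n.descFactorial (r + 1) := by
          rw [Nat.descFactorial_succ]; ring

theorem descFactorial_mul_pow_lt {m n r : ℕ} (hm : 0 < m) (hmn : m < n) (hr : 1 < r)
    (hrn : r ≤ n) : m.descFactorial r * n ^ r < m ^ r * n.descFactorial r := by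
  obtain ⟨i, rfl⟩ : ∃ i, r = i + 1 := Nat.exists_eq_add_one.mpr (by lia)
  have hpos : 0 < m ^ i * n.descFactorial i :=
    Nat.mul_pos (Nat.pow_pos hm) (Nat.descFactorial_pos.mpr (by lia))
  calc m.descFactorial (i + 1) * n ^ (i + 1)
      = (m - i) * n * (m.descFactorial i * n ^ i) := by
        rw [Nat.descFactorial_succ]; ring
    _ ≤ (m - i) * n * (m ^ i * n.descFactorial i) :=
        Nat.mul_le_mul_left _ (descFactorial_mul_pow_le hmn.le i)
    _ < m * (n - i) * (m ^ i * n.descFactorial i) :=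
        Nat.mul_lt_mul_of_pos_right (sub_mul_lt_mul_sub hm hmn (by lia) hrn) hpos
    _ = m ^ (i + 1) * n.descFactorial (i + 1) := by
        rw [Nat.descFactorial_succ]; ring

theorem choose_sub_mul_pow_lt {n k r : ℕ} (hr : 1 < r) (hrn : r ≤ n) (hk : 0 < k) (hkn : k < n) :
    (n - r).choose k * n ^ r < (n - k) ^ r * n.choose k := by
  refine lt_of_mul_lt_mul_right' (a := n.descFactorial r) ?_
  calc (n - r).choose k * n ^ r * n.descFactorial r
      = n.choose k * ((n - k).descFactorial r * n ^ r) := by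
        rw [mul_right_comm, choose_sub_mul_descFactorial, mul_assoc]
    _ < n.choose k * ((n - k) ^ r * n.descFactorial r) :=
        Nat.mul_lt_mul_of_pos_left
          (descFactorial_mul_pow_lt (by lia) (by lia) hr hrn) (Nat.choose_pos hkn.le)
    _ = (n - k) ^ r * n.choose k * n.descFactorial r := by ring

theorem ablation_bound_tighter_general {K : Type*} [Field K] [LinearOrder K]
    [IsStrictOrderedRing K] {n k ρ : ℕ} (hρ : 1 < ρ) (hρn : ρ ≤ n) (hk : 0 < k) (hkn : k < n) :
    ((n - ρ).choose k : K) / (n.choose k : K) < (1 - (k : K) / (n : K)) ^ ρ := by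
  have hn : (0 : K) < n := Nat.cast_pos.mpr (hk.trans hkn)
  have hchoose : (0 : K) < n.choose k := Nat.cast_pos.mpr (Nat.choose_pos hkn.le)
  rw [one_sub_div hn.ne', ← Nat.cast_sub hkn.le, div_pow, div_lt_div_iff₀ hchoose (pow_pos hn ρ)]
  exact_mod_cast choose_sub_mul_pow_lt hρ hρn hk hkn

/-- Paper's Proposition (tighter guarantees, Appendix B): for `ρ > 1`, `k > 0` and
`k + ρ ≤ n`, the hypergeometric ratio `C(n−ρ,k)/C(n,k)` is strictly smaller than
`(1 − k/n)^ρ`; hence `Δ = 1 − (1 − k/n)^ρ < Δ^L = 1 − C(n−ρ,k)/C(n,k)`. -/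
theorem ablation_bound_tighter (n k ρ : ℕ) (hρ : 1 < ρ) (hk : 0 < k)
    (h : k + ρ ≤ n) :
    ((n - ρ).choose k : ℝ) / (n.choose k : ℝ) < (1 - (k : ℝ) / (n : ℝ)) ^ ρ :=
  ablation_bound_tighter_general hρ (by lia) hk (by lia)
end

section
/- Let G be a simple graph on a vertex type V and let w, v ∈ V. If p and p' are two walks from w to v that are both paths (no repeated vertices), each of length at most 2, and p ≠ p', then p and p' share no edge, i.e. their edge sets are disjoint. (Key graph-theoretic fact behind the paper's Proposition that the single-source multiplicative bound is tight for GNNs with at most 2 layers: all simple paths of length at most 2 between a fixed source and target are pairwise edge-disjoint, hence the corresponding path events are independent.) -/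
/-!
A walk of length at most two is determined by its second vertex, the third one being its end. Each
of its edges joins the second vertex to one of the two endpoints, and since a graph has no loops,
the edge and the endpoints together reveal the second vertex.
-/

section ShortWalks

variable {V : Type*} {G : SimpleGraph V} {w v : V} {p q : G.Walk w v}

theorem walk_eq_of_snd_eq_of_length_le_two (hp : p.length ≤ 2) (hq : q.length ≤ 2)
    (hsnd : p.snd = q.snd) : p = q := by
  refine SimpleGraph.Walk.ext_getVert fun k ↦ ?_
  match k with
  | 0 => rw [p.getVert_zero, q.getVert_zero]
  | 1 => exact hsnd
  | k + 2 => rw [p.getVert_of_length_le (by lia), q.getVert_of_length_le (by lia)]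

theorem eq_mk_start_snd_or_eq_mk_snd_end_of_length_le_two (hp : p.length ≤ 2) {e : Sym2 V}
    (he : e ∈ p.edges) : e = s(w, p.snd) ∨ e = s(p.snd, v) := by
  match p with
  | .nil => simp at he
  | .cons _ .nil => simpa using Or.inl he
  | .cons _ (.cons _ .nil) => simpa using he
  | .cons _ (.cons _ (.cons _ _)) => simp at hp

theorem start_ne_snd_of_mem_edges {e : Sym2 V} (he : e ∈ p.edges) : w ≠ p.snd := by
  have hnil : ¬p.Nil := SimpleGraph.Walk.edges_eq_nil.not.mp (List.ne_nil_of_mem he)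
  exact (p.adj_snd hnil).ne

theorem snd_eq_of_mem_edges_of_length_le_two (hp : p.length ≤ 2) (hq : q.length ≤ 2)
    {e : Sym2 V} (he : e ∈ p.edges) (he' : e ∈ q.edges) : p.snd = q.snd := by
  have hwp := start_ne_snd_of_mem_edges he
  have hwq := start_ne_snd_of_mem_edges he'
  rcases eq_mk_start_snd_or_eq_mk_snd_end_of_length_le_two hp he with rfl | rfl <;>
    rcases eq_mk_start_snd_or_eq_mk_snd_end_of_length_le_two hq he' with h | h
  · exact Sym2.congr_right.mp h
  · rcases Sym2.eq_iff.mp h with ⟨hw, -⟩ | ⟨-, hsnd⟩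
    · exact absurd hw hwq
    · exact hsnd
  · rcases Sym2.eq_iff.mp h with ⟨hw, -⟩ | ⟨hsnd, -⟩
    · exact absurd hw.symm hwp
    · exact hsnd
  · exact Sym2.congr_left.mp h

theorem paths_length_le_two_edge_disjoint_general (hp : p.length ≤ 2) (hq : q.length ≤ 2)
    (hne : p ≠ q) : p.edges.Disjoint q.edges := fun _ he he' ↦
  hne (walk_eq_of_snd_eq_of_length_le_two hp hq
    (snd_eq_of_mem_edges_of_length_le_two hp hq he he'))

end ShortWalks

/-- Key fact behind the tightness of the single-source multiplicative bound for GNNs with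
at most 2 layers: in a simple graph, two distinct paths of length at most 2 between the same
pair of vertices share no edge. -/
theorem paths_length_le_two_edge_disjoint {V : Type*} (G : SimpleGraph V) (w v : V)
    (p p' : G.Walk w v) (hp : p.IsPath) (hp' : p'.IsPath)
    (hlen : p.length ≤ 2) (hlen' : p'.length ≤ 2) (hne : p ≠ p') :
    ∀ e, e ∈ p.edges → e ∉ p'.edges :=
  fun _ he he' ↦ paths_length_le_two_edge_disjoint_general hlen hlen' hne he he'
end

section
/- Let G be a simple graph on a finite vertex type V with decidable equality, v₀ ∈ V a target node, and k a natural number. For a finite set K ⊆ V with v₀ ∈ K, let S(K) = {u ∈ K | u is reachable from v₀ in the subgraph of G induced on K}. Let S ⊆ V be a finite set with v₀ ∈ S and |S| ≤ k + 1 such that every u ∈ S is reachable from v₀ in the subgraph of G induced on S, and let N_S = {w ∈ V \ S | ∃ u ∈ S, G.Adj w u} be the neighbourhood of S. Then the number of finite sets K ⊆ V with |K| = k + 1, v₀ ∈ K and S(K) = S equals the binomial coefficient C(|V| − |N_S| − |S|, k + 1 − |S|). (Paper's Lemma on the correctness of Algorithm 1: β_S = C(|V_v| − |N_S| − |S|,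 k+1−|S|) is the size of the equivalence class of retention sets whose reduced representative is S; in particular a representative exists iff β_S > 0.) -/
open Classical in
/-- The reduced representative `S(K)` of a retention set `K`: the set of retained nodes
that are still reachable from the target node `v₀` in the subgraph of `G` induced on `K`. -/
noncomputable def reducedRep {V : Type*} [Fintype V] [DecidableEq V]
    (G : SimpleGraph V) (v₀ : V) (K : Finset V) : Finset V :=
  K.filter fun u => ∃ (hv : v₀ ∈ K) (hu : u ∈ K),
    (G.induce (K : Set V)).Reachable ⟨v₀, Finset.mem_coe.mpr hv⟩ ⟨u, Finset.mem_coe.mpr hu⟩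

/-!
A set `S` that contains `v₀` and is connected to it is its own reduced representative, so
monotonicity of `K ↦ S(K)` gives `S ⊆ S(K)` whenever `S ⊆ K`. If moreover `K` avoids `N_S`, no walk
in `K` can leave `S`, and `S(K) = S`. Conversely, `S(K)` absorbs each of its neighbours in `K`.
Hence the retention sets represented by `S` are those in the interval `S ⊆ K ⊆ V \ N_S`.
-/

section

variable {V : Type*} [Fintype V] [DecidableEq V] {G : SimpleGraph V} {v₀ u w : V} {K S : Finset V}

lemma mem_reducedRep : u ∈ reducedRep G v₀ K ↔ ∃ (hv : v₀ ∈ K) (hu : u ∈ K),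
    (G.induce (K : Set V)).Reachable ⟨v₀, Finset.mem_coe.mpr hv⟩ ⟨u, Finset.mem_coe.mpr hu⟩ := by
  classical
  rw [reducedRep, Finset.mem_filter]
  exact and_iff_right_of_imp fun ⟨_, hu, _⟩ ↦ hu

lemma reducedRep_subset : reducedRep G v₀ K ⊆ K := by
  intro u hu
  obtain ⟨-, huK, -⟩ := mem_reducedRep.mp hu
  exact huK

lemma reducedRep_mono : Monotone (reducedRep G v₀) := by
  intro K L hKL u hu
  obtain ⟨hv, huK, hreach⟩ := mem_reducedRep.mp hu
  exact mem_reducedRep.mpr ⟨hKL hv, hKL huK,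
    hreach.map (G.induceHomOfLE (Finset.coe_subset.mpr hKL)).toHom⟩

lemma reducedRep_eq_self (hv₀ : v₀ ∈ S)
    (hconn : ∀ u (hu : u ∈ S), (G.induce (S : Set V)).Reachable
      ⟨v₀, Finset.mem_coe.mpr hv₀⟩ ⟨u, Finset.mem_coe.mpr hu⟩) :
    reducedRep G v₀ S = S :=
  reducedRep_subset.antisymm fun u hu ↦ mem_reducedRep.mpr ⟨hv₀, hu, hconn u hu⟩

lemma mem_reducedRep_of_adj (hu : u ∈ reducedRep G v₀ K) (hw : w ∈ K) (hadj : G.Adj w u) :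
    w ∈ reducedRep G v₀ K := by
  obtain ⟨hv, huK, hreach⟩ := mem_reducedRep.mp hu
  have hstep : (G.induce (K : Set V)).Adj ⟨u, huK⟩ ⟨w, hw⟩ := hadj.symm
  exact mem_reducedRep.mpr ⟨hv, hw, hreach.trans hstep.reachable⟩

open Classical in
/-- The neighbourhood `N_S` of a node set `S`: the nodes outside `S` with a neighbour in `S`. These
are the nodes that a retention set represented by `S` must delete. Adjacency is decided
classically, as in `reducedRep`. -/
noncomputable def outerBoundary (G : SimpleGraph V) (S : Finset V) : Finset V :=
  Finset.univ.filter fun w ↦ w ∉ S ∧ ∃ u ∈ S, G.Adj w u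

lemma mem_outerBoundary : w ∈ outerBoundary G S ↔ w ∉ S ∧ ∃ u ∈ S, G.Adj w u := by
  classical
  rw [outerBoundary, Finset.mem_filter_univ]

lemma subset_compl_outerBoundary : S ⊆ (outerBoundary G S)ᶜ :=
  fun _ hu ↦ Finset.mem_compl.mpr fun hmem ↦ (mem_outerBoundary.mp hmem).1 hu

lemma subset_compl_outerBoundary_reducedRep :
    K ⊆ (outerBoundary G (reducedRep G v₀ K))ᶜ := by
  intro w hw
  refine Finset.mem_compl.mpr fun hmem ↦ ?_
  obtain ⟨hwS, u, hu, hadj⟩ := mem_outerBoundary.mp hmem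
  exact hwS (mem_reducedRep_of_adj hu hw hadj)

lemma reducedRep_subset_of_subset_compl_outerBoundary (hv₀ : v₀ ∈ S)
    (hK : K ⊆ (outerBoundary G S)ᶜ) : reducedRep G v₀ K ⊆ S := by
  intro u hu
  obtain ⟨_, _, ⟨p⟩⟩ := mem_reducedRep.mp hu
  by_contra huS
  obtain ⟨d, -, hfst, hsnd⟩ := p.exists_boundary_dart {x | (x : V) ∈ S} hv₀ huS
  have hboundary : (d.snd : V) ∈ outerBoundary G S :=
    mem_outerBoundary.mpr ⟨hsnd, d.fst, hfst, G.adj_symm d.adj⟩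
  exact Finset.mem_compl.mp (hK d.snd.2) hboundary

lemma mem_and_reducedRep_eq_iff (hv₀ : v₀ ∈ S) (hS : reducedRep G v₀ S = S) :
    v₀ ∈ K ∧ reducedRep G v₀ K = S ↔ S ⊆ K ∧ K ⊆ (outerBoundary G S)ᶜ := by
  constructor
  · rintro ⟨-, rfl⟩
    exact ⟨reducedRep_subset, subset_compl_outerBoundary_reducedRep⟩
  · rintro ⟨hSK, hK⟩
    refine ⟨hSK hv₀, (reducedRep_subset_of_subset_compl_outerBoundary hv₀ hK).antisymm ?_⟩
    calc S = reducedRep G v₀ S := hS.symm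
      _ ⊆ reducedRep G v₀ K := reducedRep_mono hSK

end

open Classical in
/-- Paper's Lemma on the correctness of Algorithm 1: the number of retention sets `K` of
`k + 1` nodes containing `v₀` whose reduced representative is `S` equals the binomial
coefficient `C(|V| − |N_S| − |S|, k + 1 − |S|)`, where `N_S` is the neighbourhood of `S`. -/
theorem reducedRep_class_card {V : Type*} [Fintype V] [DecidableEq V]
    (G : SimpleGraph V) (v₀ : V) (k : ℕ) (S : Finset V)
    (hv₀ : v₀ ∈ S) (hcard : S.card ≤ k + 1)
    (hconn : ∀ u (hu : u ∈ S),
      (G.induce (S : Set V)).Reachable ⟨v₀, Finset.mem_coe.mpr hv₀⟩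
        ⟨u, Finset.mem_coe.mpr hu⟩) :
    (Finset.univ.filter fun K : Finset V =>
        K.card = k + 1 ∧ v₀ ∈ K ∧ reducedRep G v₀ K = S).card =
      (Fintype.card V -
          (Finset.univ.filter fun w => w ∉ S ∧ ∃ u ∈ S, G.Adj w u).card -
          S.card).choose (k + 1 - S.card) := by
  have hclass : (Finset.univ.filter fun K : Finset V ↦
      K.card = k + 1 ∧ v₀ ∈ K ∧ reducedRep G v₀ K = S) =
      ((outerBoundary G S)ᶜ.powersetCard (k + 1)).filter (S ⊆ ·) := by
    ext K
    rw [Finset.mem_filter_univ, Finset.mem_filter, Finset.mem_powersetCard,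
      mem_and_reducedRep_eq_iff hv₀ (reducedRep_eq_self hv₀ hconn)]
    tauto
  rw [hclass, Finset.card_filter_powersetCard_subset _ _ _ subset_compl_outerBoundary hcard,
    Finset.card_compl, outerBoundary]
end
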